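/- Let Z = Z_a ∪ Z_b ∪ Z_c ∪ Z_d satisfy the half-grid hypotheses, and assume in addition that the only 4-element collinear subsets of Z are Z_a, Z_b, Z_c and Z_d (so exactly 4 lines contain 4 of the configuration points). Then Z is projectively equivalent to configuration B: there exists a linear automorphism of ℂ⁴ whose induced projective transformation maps Z onto configuration B. -/

import Mathlib

open Projectivization
open scoped LinearAlgebra.Projectivization

/-- The half-grid hypotheses for a 16-point set `Z = Z 0 ∪ Z 1 ∪ Z 2 ∪ Z 3` distributed
evenly on four pairwise skew lines `R 0, …, R 3` in `ℙ³` (lines are given by their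
2-dimensional subspaces of `ℂ⁴`):
* each `Z x` consists of 4 distinct points of the line `ℙ(R x)`;
* no nonzero homogeneous quadratic form on `ℂ⁴` vanishes at all points of `Z`;
* for each `x`, the 12 points `Z ∖ Z x` form a (3,4)-grid with respect to the remaining
  three lines: there are four pairwise skew lines `ℓ 0, …, ℓ 3`, each meeting each line
  `ℙ(R y)` (`y ≠ x`) in exactly one point, the 12 intersection points being exactly
  `Z ∖ Z x`. -/
structure HalfGridHyp (R : Fin 4 → Submodule ℂ (Fin 4 → ℂ))
    (Z : Fin 4 → Set (ℙ ℂ (Fin 4 → ℂ))) : Prop where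
  finrank_eq : ∀ x, Module.finrank ℂ (R x) = 2
  skew : ∀ x y, x ≠ y → R x ⊓ R y = ⊥
  ncard_eq : ∀ x, (Z x).ncard = 4
  mem_line : ∀ x, ∀ p ∈ Z x, p.submodule ≤ R x
  no_quadric : ¬ ∃ q : QuadraticForm ℂ (Fin 4 → ℂ), q ≠ 0 ∧
    ∀ x, ∀ p ∈ Z x, ∀ v ∈ Projectivization.submodule p, q v = 0
  grid : ∀ x : Fin 4, ∃ ℓ : Fin 4 → Submodule ℂ (Fin 4 → ℂ),
    (∀ i, Module.finrank ℂ (ℓ i) = 2) ∧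
    (∀ i j, i ≠ j → ℓ i ⊓ ℓ j = ⊥) ∧
    (∀ i, ∀ y, y ≠ x → ∃! p : ℙ ℂ (Fin 4 → ℂ),
      p.submodule ≤ ℓ i ∧ p.submodule ≤ R y) ∧
    {p : ℙ ℂ (Fin 4 → ℂ) | ∃ i y, y ≠ x ∧ p.submodule ≤ ℓ i ∧ p.submodule ≤ R y}
      = (⋃ y, Z y) \ Z x

/-- Homogeneous coordinates of the 16 points of configuration B (the harmonic
configuration): `vB x i` is the `i`-th point of the quadruple on the `x`-th line. -/
def vB : Fin 4 → Fin 4 → Fin 4 → ℂ :=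
  ![![![1,0,0,0], ![0,0,1,0], ![1,0,1,0], ![1,0,-1,0]],
    ![![0,1,0,0], ![0,0,0,1], ![0,1,0,1], ![0,1,0,-1]],
    ![![1,1,0,0], ![0,0,1,1], ![1,1,1,1], ![1,1,-1,-1]],
    ![![1,0,0,-1], ![0,1,1,0], ![1,1,1,-1], ![-1,1,1,1]]]

lemma vB_ne_zero : ∀ x i, vB x i ≠ 0 := by
  intro x i
  fin_cases x <;> fin_cases i <;> simp [vB, Matrix.cons_eq_zero_iff]

/-- The 16 points of configuration B in `ℙ³`. -/
noncomputable def ptB (x i : Fin 4) : ℙ ℂ (Fin 4 → ℂ) :=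
  Projectivization.mk ℂ (vB x i) (vB_ne_zero x i)

/-- The quadruple `Z_x` of configuration B (`x = 0,1,2,3` for `a,b,c,d`). -/
noncomputable def ZB (x : Fin 4) : Set (ℙ ℂ (Fin 4 → ℂ)) := Set.range (ptB x)

/-- Configuration B as a set of 16 points of `ℙ³`. -/
noncomputable def configB : Set (ℙ ℂ (Fin 4 → ℂ)) := ⋃ x, ZB x

/-!
Three pairwise skew lines `R 0, R 1, R 2` can be parametrized as `a, b, a + b` by one
2-dimensional space `V`, and then `R 3` is parametrized by `a + b ∘ M` for some endomorphism `M`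
of `V`. A grid line is determined by any of its points and the two other lines that it meets, so
the grids say that the four quadruples come from one quadruple `Y ⊂ ℙ(V)` and that `M` and `1 - M`
permute `Y`. A fixed point of one of these permutations would be a line through points of all four
quadruples, i.e. a further collinear quadruple. A permutation of four points without fixed points
satisfies `σ⁴ = 1`. Hence `v` and `M⁴ v` are proportional for the points `v` of `Y`, while `v` and
`M v` are not, and with `M² = t M - n` this forces `t (t² - 2n) = 0`. The same relation for
`1 - M` leaves `(t, n) = (0, 1), (2, 2), (1, 1/2)`. Exchanging `R 0` with `R 2` replaces `M` by
`1 - M`, and exchanging it with `R 1` replaces `M` by `M⁻¹`, so it suffices to treat `M² = -1`.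
Then `Y` consists of `v, M v, v - M v, v + M v`, and in the basis `a v, b v, -a (M v), -b (M v)`
of the ambient space the configuration is the harmonic one.
-/

namespace HalfGridClassification

open Module

variable {K V E : Type*} [Field K] [AddCommGroup V] [Module K V] [AddCommGroup E] [Module K E]

section Cone

/-- The punctured cone over a set `S` of points of a projective space: the vectors that are
homogeneous coordinates of some point of `S`. Linear relations between points are stated through
it, so that no representatives have to be chosen. -/
def coneOver (S : Set (ℙ K V)) : Set V :=
  {v | ∃ h : v ≠ 0, mk K v h ∈ S}

variable {S : Set (ℙ K V)} {v : V}

lemma ne_zero_of_mem_coneOver (hv : v ∈ coneOver S) : v ≠ 0 :=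
  hv.1

lemma smul_mem_coneOver_iff {c : K} (hc : c ≠ 0) : c • v ∈ coneOver S ↔ v ∈ coneOver S := by
  by_cases hv : v = 0
  · simp [hv]
  · have heq : mk K (c • v) (smul_ne_zero hc hv) = mk K v hv :=
      (mk_eq_mk_iff' K _ _ _ _).2 ⟨c, rfl⟩
    exact ⟨fun h => ⟨hv, heq ▸ h.2⟩, fun h => ⟨smul_ne_zero hc hv, heq ▸ h.2⟩⟩

lemma neg_mem_coneOver_iff : -v ∈ coneOver S ↔ v ∈ coneOver S := by
  rw [← neg_one_smul K v, smul_mem_coneOver_iff (neg_ne_zero.2 one_ne_zero)]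

lemma mem_coneOver_preimage_map_iff {f : V →ₗ[K] E} (hf : Function.Injective f)
    {T : Set (ℙ K E)} : v ∈ coneOver (map f hf ⁻¹' T) ↔ f v ∈ coneOver T :=
  ⟨fun h => ⟨(map_ne_zero_iff f hf).2 h.1, h.2⟩, fun h => ⟨(map_ne_zero_iff f hf).1 h.1, h.2⟩⟩

lemma coneOver_nonempty (hS : S.Nonempty) : (coneOver S).Nonempty := by
  obtain ⟨p, hp⟩ := hS
  exact ⟨p.rep, p.rep_nonzero, by rwa [mk_rep]⟩

lemma mk_submodule_le_iff {h : v ≠ 0} {U : Submodule K V} :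
    (mk K v h).submodule ≤ U ↔ v ∈ U := by
  rw [submodule_mk, Submodule.span_singleton_le_iff_mem]

end Cone

section LinearAlgebra

lemma exists_smul_add_smul_eq_of_finrank_eq_two {L : Submodule K E} (hL : finrank K L = 2)
    {p q r : E} (hp : p ∈ L) (hq : q ∈ L) (hr : r ∈ L) (hpq : LinearIndependent K ![p, q]) :
    ∃ s t : K, s • p + t • q = r := by
  have : FiniteDimensional K L := Module.finite_of_finrank_eq_succ hL
  have hspan : Submodule.span K {p, q} = L := by
    refine Submodule.eq_of_le_of_finrank_eq
      (Submodule.span_le.2 (Set.insert_subset hp (Set.singleton_subset_iff.2 hq))) ?_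
    rw [hL, ← Matrix.range_cons_cons_empty p q ![], finrank_span_eq_card hpq, Fintype.card_fin]
  exact Submodule.mem_span_pair.1 (hspan ▸ hr)

lemma exists_linearMap_forall_add_mem {U W : Submodule K E} (h : IsCompl U W) (f : V →ₗ[K] E) :
    ∃ g : V →ₗ[K] E, (∀ v, g v ∈ U) ∧ ∀ v, f v + g v ∈ W := by
  refine ⟨-(U.projection W h ∘ₗ f), fun v => U.neg_mem (by simp), fun v => ?_⟩
  simpa [← sub_eq_add_neg] using Submodule.sub_projection_mem h (f v)

lemma exists_comp_eq_of_range_le {V' : Type*} [AddCommGroup V'] [Module K V'] {f : V →ₗ[K] E}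
    {g : V' →ₗ[K] E} (hf : Function.Injective f) (h : g.range ≤ f.range) :
    ∃ M : V' →ₗ[K] V, f ∘ₗ M = g := by
  obtain ⟨r, hr⟩ := f.exists_leftInverse_of_injective (LinearMap.ker_eq_bot.2 hf)
  refine ⟨r ∘ₗ g, LinearMap.ext fun v => ?_⟩
  obtain ⟨u, hu⟩ := h ⟨v, rfl⟩
  simp [← hu, show r (f u) = u from LinearMap.congr_fun hr u]

lemma exists_mul_self_eq_of_finrank_eq_two (hV : finrank K V = 2) (M : End K V) :
    ∃ t n : K, M * M = t • M - n • (1 : End K V) := by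
  have : FiniteDimensional K V := Module.finite_of_finrank_eq_succ hV
  have hdeg : M.charpoly.natDegree = 2 := M.charpoly_natDegree.trans hV
  have h := M.aeval_self_charpoly
  rw [M.charpoly_monic.as_sum, hdeg] at h
  simp only [Finset.sum_range_succ, Finset.sum_range_zero, map_add, map_mul, map_one,
    Polynomial.aeval_X, Polynomial.aeval_C, Algebra.algebraMap_eq_smul_one, smul_mul_assoc,
    one_mul, pow_zero, pow_one, zero_add, sq] at h
  refine ⟨-M.charpoly.coeff 1, M.charpoly.coeff 0, ?_⟩
  rw [eq_neg_of_add_eq_zero_left h]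
  module

variable {M : End K V} {t n : K}

lemma one_sub_mul_one_sub_eq (hM : M * M = t • M - n • (1 : End K V)) :
    (1 - M) * (1 - M) = (2 - t) • (1 - M) - (1 - t + n) • (1 : End K V) := by
  calc (1 - M) * (1 - M) = 1 - M - M + M * M := by noncomm_ring
    _ = (2 - t) • (1 - M) - (1 - t + n) • (1 : End K V) := by rw [hM]; module

lemma one_sub_mul_self_eq_neg_one (hM : M * ((2 : K) • (1 - M)) = 1) :
    (1 - (2 : K) • (1 - M)) * (1 - (2 : K) • (1 - M)) = -1 := by
  calc (1 - (2 : K) • (1 - M)) * (1 - (2 : K) • (1 - M))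
      = 1 - (2 : K) • (M * ((2 : K) • (1 - M))) := by
        simp only [two_smul]; noncomm_ring
    _ = -1 := by rw [hM]; module

lemma mul_eq_zero_of_pow_four_apply_eq_smul (hM : M * M = t • M - n • (1 : End K V)) {v : V}
    (hv : LinearIndependent K ![v, M v]) {c : K} (hc : (M ^ 4) v = c • v) :
    t * (t ^ 2 - 2 * n) = 0 := by
  have hMM (w : V) : M (M w) = t • M w - n • w := LinearMap.congr_fun hM w
  have hM4 : (M ^ 4) v = (n ^ 2 - t ^ 2 * n) • v + (t * (t ^ 2 - 2 * n)) • M v := by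
    simp only [pow_succ, pow_zero, one_mul, Module.End.mul_apply, hMM, map_sub, map_smul]
    module
  refine (hv.eq_zero_of_pair (s := n ^ 2 - t ^ 2 * n - c) ?_).2
  rw [sub_smul, sub_add_eq_add_sub, ← hM4, hc, sub_self]

lemma injective_of_mul_self_eq (hM : M * M = t • M - n • (1 : End K V)) {v : V}
    (hMv : LinearIndependent K ![M v, M (M v)]) :
    Function.Injective M := by
  have hMM (w : V) : M (M w) = t • M w - n • w := LinearMap.congr_fun hM w
  have hn : n ≠ 0 := by
    rintro rfl
    exact (LinearIndependent.pair_iff' (hMv.ne_zero 0)).1 hMv t (by simp [hMM])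
  refine (injective_iff_map_eq_zero M).2 fun w hw => ?_
  simpa [hw, hn] using hMM w

lemma trace_det_trichotomy [NeZero (2 : K)] (h : t * (t ^ 2 - 2 * n) = 0)
    (h' : (2 - t) * ((2 - t) ^ 2 - 2 * (1 - t + n)) = 0) :
    t = 0 ∧ n = 1 ∨ t = 2 ∧ n = 2 ∨ t = 1 ∧ 2 * n = 1 := by
  have h2 : (2 : K) ≠ 0 := two_ne_zero
  rcases mul_eq_zero.1 h with rfl | h
  · exact .inl ⟨rfl, mul_left_cancel₀ (mul_ne_zero h2 h2) (by linear_combination -h')⟩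
  rcases mul_eq_zero.1 h' with h' | h'
  · obtain rfl : t = 2 := (sub_eq_zero.1 h').symm
    exact .inr (.inl ⟨rfl, mul_left_cancel₀ h2 (by linear_combination -h)⟩)
  · obtain rfl : t = 1 := mul_left_cancel₀ h2 (by linear_combination h - h')
    exact .inr (.inr ⟨rfl, by linear_combination -h⟩)

end LinearAlgebra

section FixedPointFree

lemma perm_fin_four_pow_four_eq_one :
    ∀ σ : Equiv.Perm (Fin 4), (∀ x, σ x ≠ x) → σ ^ 4 = 1 := by
  decide +kernel

lemma iterate_four_eq_self_of_forall_ne {α : Type*} {f : α → α} {s : Set α} (hs : s.ncard = 4)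
    (hf : Set.InjOn f s) (hmaps : Set.MapsTo f s s) (hfix : ∀ x ∈ s, f x ≠ x) {x : α}
    (hx : x ∈ s) : f^[4] x = x := by
  have : Finite s := Set.finite_of_ncard_ne_zero (by rw [hs]; decide)
  let e : s ≃ Fin 4 := (Finite.equivFin s).trans (finCongr hs)
  let σ : Equiv.Perm s := Equiv.ofBijective hmaps.restrict
    (Finite.injective_iff_bijective.1 (hmaps.restrict_inj.2 hf))
  have hσ : e.permCongr σ ^ 4 = 1 := by
    refine perm_fin_four_pow_four_eq_one _ fun i hi => hfix _ (e.symm i).2 ?_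
    exact congrArg Subtype.val (e.eq_symm_apply.2 hi)
  have hσ4 : σ ^ 4 = 1 := e.permCongrHom.injective (by rw [map_pow, map_one]; exact hσ)
  exact congrArg Subtype.val (Equiv.Perm.congr_fun hσ4 ⟨x, hx⟩)

lemma exists_pow_four_apply_eq_smul {M : End K V} (hM : Function.Injective M) {Y : Set (ℙ K V)}
    (hY : Y.ncard = 4) (hmaps : ∀ v ∈ coneOver Y, M v ∈ coneOver Y)
    (hfix : ∀ v ∈ coneOver Y, LinearIndependent K ![v, M v]) {v : V} (hv : v ∈ coneOver Y) :
    ∃ c : K, (M ^ 4) v = c • v := by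
  have hmapsTo : Set.MapsTo (map M hM) Y Y := fun p hp => by
    induction p using ind with
    | h w hw => exact (hmaps w ⟨hw, hp⟩).2
  have hne : ∀ p ∈ Y, map M hM p ≠ p := fun p hp => by
    induction p using ind with
    | h w hw =>
      rw [map_mk, ne_eq, mk_eq_mk_iff', not_exists]
      exact (LinearIndependent.pair_iff' hw).1 (hfix w ⟨hw, hp⟩)
  have h4 := iterate_four_eq_self_of_forall_ne hY (map_injective M hM).injOn hmapsTo hne hv.2
  simp only [Function.iterate_succ, Function.iterate_zero, Function.comp_apply, id_eq, map_mk,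
    mk_eq_mk_iff'] at h4
  obtain ⟨c, hc⟩ := h4
  exact ⟨c, hc.symm⟩

end FixedPointFree

section HarmonicConfiguration

/-- Homogeneous coordinates of the points of the harmonic configuration over a field `K`; over `ℂ`
this is `vB`. -/
def harmonicVec (K : Type*) [Field K] : Fin 4 → Fin 4 → Fin 4 → K :=
  ![![![1, 0, 0, 0], ![0, 0, 1, 0], ![1, 0, 1, 0], ![1, 0, -1, 0]],
    ![![0, 1, 0, 0], ![0, 0, 0, 1], ![0, 1, 0, 1], ![0, 1, 0, -1]],
    ![![1, 1, 0, 0], ![0, 0, 1, 1], ![1, 1, 1, 1], ![1, 1, -1, -1]],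
    ![![1, 0, 0, -1], ![0, 1, 1, 0], ![1, 1, 1, -1], ![-1, 1, 1, 1]]]

lemma harmonicVec_ne_zero (x i : Fin 4) : harmonicVec K x i ≠ 0 := by
  fin_cases x <;> fin_cases i <;> simp [harmonicVec, Matrix.cons_eq_zero_iff]

/-- The points of the harmonic configuration over `K`; over `ℂ` this is `ptB`. -/
noncomputable def harmonicPt (K : Type*) [Field K] (x i : Fin 4) : ℙ K (Fin 4 → K) :=
  mk K (harmonicVec K x i) (harmonicVec_ne_zero x i)

lemma harmonicPt_injective [NeZero (2 : K)] (x : Fin 4) :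
    Function.Injective (harmonicPt K x) := by
  intro i j hij
  obtain ⟨c, hc⟩ := (mk_eq_mk_iff' K _ _ _ _).1 hij
  have htwo : (2 : K) ≠ 0 := two_ne_zero
  have hcoord (k : Fin 4) : c * harmonicVec K x j k = harmonicVec K x i k := congrFun hc k
  have h0 := hcoord 0
  have h1 := hcoord 1
  have h2 := hcoord 2
  have h3 := hcoord 3
  fin_cases x <;> fin_cases i <;> fin_cases j <;>
    simp [harmonicVec] at h0 h1 h2 h3 ⊢ <;> grind

/-- A set of points of `ℙ(E)`, with `E` of dimension four, is harmonic if it is projectively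
equivalent to the harmonic configuration; over `ℂ` the latter is `configB`. -/
def IsHarmonic (S : Set (ℙ K E)) : Prop :=
  ∃ F : (Fin 4 → K) ≃ₗ[K] E,
    map F.toLinearMap F.injective '' (⋃ x, Set.range (harmonicPt K x)) = S

lemma isHarmonic_iUnion_of_forall_mem [NeZero (2 : K)] {Z : Fin 4 → Set (ℙ K E)}
    (hZ : ∀ x, (Z x).ncard = 4) (F : (Fin 4 → K) ≃ₗ[K] E)
    (hF : ∀ x i, F (harmonicVec K x i) ∈ coneOver (Z x)) : IsHarmonic (⋃ x, Z x) := by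
  refine ⟨F, ?_⟩
  rw [Set.image_iUnion]
  refine Set.iUnion_congr fun x => ?_
  rw [← Set.range_comp]
  refine Set.eq_of_subset_of_ncard_le (Set.range_subset_iff.2 fun i => (hF x i).2) ?_
    (Set.finite_of_ncard_ne_zero (by rw [hZ]; decide))
  rw [hZ, Set.ncard_range_of_injective
    ((map_injective _ F.injective).comp (harmonicPt_injective x)), Nat.card_fin]

end HarmonicConfiguration

section GridFrame

/-- The parametrizations `a, b, a + b, a + b ∘ M` of the four lines of a grid frame. -/
def gridMap (a b : V →ₗ[K] E) (M : End K V) : Fin 4 → V →ₗ[K] E :=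
  ![a, b, a + b, a + b ∘ₗ M]

/-- A normal form of a half grid: injective maps `a, b : V → E` with independent images
parametrize the first two lines in such a way that `a + b` and `a + b ∘ M` parametrize the last
two, and all four parametrizations carry the same quadruple `Y` of points of `ℙ(V)` to the
quadruples `Z x`. The conditions on `M` and `1 - M` say that both preserve `Y`, and the last field
says that `M` fixes no point of `Y`, i.e. that no line meets all four quadruples in points with the
same parameter. -/
structure IsGridFrame (Z : Fin 4 → Set (ℙ K E)) (a b : V →ₗ[K] E) (M : End K V)
    (Y : Set (ℙ K V)) : Prop where
  ncard_base : Y.ncard = 4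
  ncard_eq : ∀ x, (Z x).ncard = 4
  eq_zero_of_add_eq_zero : ∀ v w, a v + b w = 0 → v = 0 ∧ w = 0
  gridMap_mem : ∀ x, ∀ v ∈ coneOver Y, gridMap a b M x v ∈ coneOver (Z x)
  map_mem_iff : ∀ v, M v ∈ coneOver Y ↔ v ∈ coneOver Y
  sub_map_mem_iff : ∀ v, v - M v ∈ coneOver Y ↔ v ∈ coneOver Y
  linearIndependent : ∀ v ∈ coneOver Y, LinearIndependent K ![v, M v]

namespace IsGridFrame

variable {Z : Fin 4 → Set (ℙ K E)} {a b : V →ₗ[K] E} {M : End K V} {Y : Set (ℙ K V)} {t n : K}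

lemma swap_zero_two (F : IsGridFrame Z a b M Y) :
    IsGridFrame (Z ∘ Equiv.swap 0 2) (a + b) (-b) (1 - M) Y where
  ncard_base := F.ncard_base
  ncard_eq x := F.ncard_eq _
  eq_zero_of_add_eq_zero v w h := by
    obtain ⟨hv, hvw⟩ := F.eq_zero_of_add_eq_zero v (v - w) (by
      simpa [sub_eq_add_neg, add_assoc] using h)
    exact ⟨hv, by simpa [hv] using hvw⟩
  gridMap_mem x v hv := by
    fin_cases x
    · simpa [gridMap] using F.gridMap_mem 2 v hv
    · simpa [gridMap, Equiv.swap_apply_of_ne_of_ne, neg_mem_coneOver_iff] using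
        F.gridMap_mem 1 v hv
    · simpa [gridMap] using F.gridMap_mem 0 v hv
    · simpa [gridMap, Equiv.swap_apply_of_ne_of_ne] using F.gridMap_mem 3 v hv
  map_mem_iff := F.sub_map_mem_iff
  sub_map_mem_iff v := by simpa using F.map_mem_iff v
  linearIndependent v hv := by
    simpa [sub_eq_add_neg] using F.linearIndependent v hv

lemma swap_zero_one (F : IsGridFrame Z a b M Y) {N : End K V} (hN : M * N = 1) :
    IsGridFrame (Z ∘ Equiv.swap 0 1) b a N Y := by
  have hMN (v : V) : M (N v) = v := LinearMap.congr_fun hN v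
  have hmem (v : V) : N v ∈ coneOver Y ↔ v ∈ coneOver Y := by rw [← F.map_mem_iff, hMN]
  refine ⟨F.ncard_base, fun x => F.ncard_eq _, fun v w h => ?_, fun x v hv => ?_, hmem,
    fun v => ?_, fun v hv => ?_⟩
  · exact (F.eq_zero_of_add_eq_zero w v (by rwa [add_comm])).symm
  · fin_cases x
    · simpa [gridMap] using F.gridMap_mem 1 v hv
    · simpa [gridMap] using F.gridMap_mem 0 v hv
    · simpa [gridMap, Equiv.swap_apply_of_ne_of_ne, add_comm] using F.gridMap_mem 2 v hv
    · simpa [gridMap, Equiv.swap_apply_of_ne_of_ne, add_comm, hMN] using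
        F.gridMap_mem 3 (N v) ((hmem v).2 hv)
  · have h := F.sub_map_mem_iff (N v)
    rwa [hMN, ← neg_mem_coneOver_iff, neg_sub, hmem] at h
  · have h := F.linearIndependent (N v) ((hmem v).2 hv)
    rwa [hMN, LinearIndependent.pair_symm_iff] at h

lemma coneOver_base_nonempty (F : IsGridFrame Z a b M Y) : (coneOver Y).Nonempty :=
  coneOver_nonempty (Set.nonempty_of_ncard_ne_zero (by rw [F.ncard_base]; decide))

lemma trace_mul_eq_zero (F : IsGridFrame Z a b M Y) (hM : M * M = t • M - n • (1 : End K V)) :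
    t * (t ^ 2 - 2 * n) = 0 := by
  obtain ⟨v, hv⟩ := F.coneOver_base_nonempty
  have hmaps (w : V) (hw : w ∈ coneOver Y) : M w ∈ coneOver Y := (F.map_mem_iff w).2 hw
  have hinj := injective_of_mul_self_eq hM (F.linearIndependent _ (hmaps v hv))
  obtain ⟨c, hc⟩ := exists_pow_four_apply_eq_smul hinj F.ncard_base hmaps F.linearIndependent hv
  exact mul_eq_zero_of_pow_four_apply_eq_smul hM (F.linearIndependent v hv) hc

lemma mul_self_trichotomy [NeZero (2 : K)] (F : IsGridFrame Z a b M Y) (hV : finrank K V = 2) :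
    M * M = -1 ∨ (1 - M) * (1 - M) = -1 ∨ M * ((2 : K) • (1 - M)) = 1 := by
  obtain ⟨t, n, hM⟩ := exists_mul_self_eq_of_finrank_eq_two hV M
  have hM' := one_sub_mul_one_sub_eq hM
  rcases trace_det_trichotomy (F.trace_mul_eq_zero hM)
    (F.swap_zero_two.trace_mul_eq_zero hM') with
    ⟨rfl, rfl⟩ | ⟨rfl, rfl⟩ | ⟨rfl, hn⟩
  · exact .inl (by simpa using hM)
  · refine .inr (.inl (hM'.trans ?_))
    module
  · refine .inr (.inr ?_)
    rw [mul_smul_comm, mul_sub, mul_one, hM, one_smul, sub_sub_cancel, smul_smul, hn, one_smul]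

end IsGridFrame

/-- The linear map `K⁴ → E` that takes the standard basis to `a v, b v, -a w, -b w`. -/
def frameMap (a b : V →ₗ[K] E) (v w : V) : (Fin 4 → K) →ₗ[K] E :=
  a ∘ₗ ((LinearMap.proj 0).smulRight v - (LinearMap.proj 2).smulRight w) +
    b ∘ₗ ((LinearMap.proj 1).smulRight v - (LinearMap.proj 3).smulRight w)

lemma frameMap_apply (a b : V →ₗ[K] E) (v w : V) (x : Fin 4 → K) :
    frameMap a b v w x = a (x 0 • v - x 2 • w) + b (x 1 • v - x 3 • w) :=
  rfl

namespace IsGridFrame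

variable {Z : Fin 4 → Set (ℙ K E)} {a b : V →ₗ[K] E} {M : End K V} {Y : Set (ℙ K V)}

lemma frameMap_injective (F : IsGridFrame Z a b M Y) {v w : V}
    (hvw : LinearIndependent K ![v, w]) : Function.Injective (frameMap a b v w) := by
  refine (injective_iff_map_eq_zero _).2 fun x hx => ?_
  obtain ⟨h02, h13⟩ := F.eq_zero_of_add_eq_zero _ _ hx
  rw [← LinearIndependent.pair_neg_right_iff] at hvw
  obtain ⟨h0, h2⟩ := hvw.eq_zero_of_pair (s := x 0) (t := x 2) (by simpa [sub_eq_add_neg] using h02)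
  obtain ⟨h1, h3⟩ := hvw.eq_zero_of_pair (s := x 1) (t := x 3) (by simpa [sub_eq_add_neg] using h13)
  ext i
  fin_cases i <;> assumption

lemma frameMap_harmonicVec_mem (F : IsGridFrame Z a b M Y) (hM : M * M = -1) {v : V}
    (hv : v ∈ coneOver Y) (x i : Fin 4) :
    frameMap a b v (M v) (harmonicVec K x i) ∈ coneOver (Z x) := by
  have hMM : M (M v) = -v := LinearMap.congr_fun hM v
  let u : Fin 4 → V := ![v, -M v, v - M v, v + M v]
  have hu : ∀ i, u i ∈ coneOver Y := by
    have hMv := (F.map_mem_iff v).2 hv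
    have hadd := (F.sub_map_mem_iff (M v)).2 hMv
    rw [hMM, sub_neg_eq_add, add_comm] at hadd
    simpa [u, Fin.forall_fin_succ, neg_mem_coneOver_iff] using
      ⟨hv, hMv, (F.sub_map_mem_iff v).2 hv, hadd⟩
  have heq : frameMap a b v (M v) (harmonicVec K x i) = gridMap a b M x (u i) ∨
      frameMap a b v (M v) (harmonicVec K x i) = -gridMap a b M x (u i) := by
    by_cases h : x = 3 ∧ i = 3
    · right
      obtain ⟨rfl, rfl⟩ := h
      simp [frameMap_apply, harmonicVec, gridMap, u, hMM, sub_eq_add_neg, add_comm,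
        add_left_comm, add_assoc]
    · left
      fin_cases x <;> fin_cases i <;>
        simp_all [frameMap_apply, harmonicVec, gridMap, u, sub_eq_add_neg, add_comm,
          add_left_comm]
  rcases heq with h | h
  · exact h ▸ F.gridMap_mem x _ (hu i)
  · exact h ▸ neg_mem_coneOver_iff.2 (F.gridMap_mem x _ (hu i))

lemma isHarmonic_of_mul_self_eq_neg_one [NeZero (2 : K)] (F : IsGridFrame Z a b M Y)
    (hE : finrank K E = 4) (hM : M * M = -1) : IsHarmonic (⋃ x, Z x) := by
  have : FiniteDimensional K E := Module.finite_of_finrank_eq_succ hE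
  obtain ⟨v, hv⟩ := F.coneOver_base_nonempty
  exact isHarmonic_iUnion_of_forall_mem F.ncard_eq
    (LinearMap.linearEquivOfInjective _ (F.frameMap_injective (F.linearIndependent v hv))
      (by rw [finrank_fin_fun, hE]))
    (F.frameMap_harmonicVec_mem hM hv)

lemma isHarmonic_of_one_sub_mul_self_eq_neg_one [NeZero (2 : K)] (F : IsGridFrame Z a b M Y)
    (hE : finrank K E = 4) (hM : (1 - M) * (1 - M) = -1) : IsHarmonic (⋃ x, Z x) := by
  rw [← (Equiv.swap (0 : Fin 4) 2).surjective.iUnion_comp]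
  exact F.swap_zero_two.isHarmonic_of_mul_self_eq_neg_one hE hM

lemma isHarmonic [NeZero (2 : K)] (F : IsGridFrame Z a b M Y) (hV : finrank K V = 2)
    (hE : finrank K E = 4) : IsHarmonic (⋃ x, Z x) := by
  rcases F.mul_self_trichotomy hV with hM | hM | hM
  · exact F.isHarmonic_of_mul_self_eq_neg_one hE hM
  · exact F.isHarmonic_of_one_sub_mul_self_eq_neg_one hE hM
  · rw [← (Equiv.swap (0 : Fin 4) 1).surjective.iUnion_comp]
    exact (F.swap_zero_one hM).isHarmonic_of_one_sub_mul_self_eq_neg_one hE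
      (one_sub_mul_self_eq_neg_one hM)

end IsGridFrame

end GridFrame

section HalfGrid

/-- Four pairwise skew lines `R x` of `ℙ(E)`, each with a quadruple `Z x` of points, such that
away from any one of the lines, every point of the configuration lies on a line through points of
the other quadruples: a weak form of `HalfGridHyp`, over any field. -/
structure IsHalfGrid (R : Fin 4 → Submodule K E) (Z : Fin 4 → Set (ℙ K E)) : Prop where
  finrank_eq : ∀ x, finrank K (R x) = 2
  disjoint : ∀ x y, x ≠ y → Disjoint (R x) (R y)
  ncard_eq : ∀ x, (Z x).ncard = 4
  mem_of_mem_coneOver : ∀ x, ∀ v ∈ coneOver (Z x), v ∈ R x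
  exists_transversal : ∀ x i, i ≠ x → ∀ p ∈ coneOver (Z i), ∃ L : Submodule K E,
    finrank K L = 2 ∧ p ∈ L ∧ ∀ y, y ≠ x → ∃ q ∈ coneOver (Z y), q ∈ L

lemma exists_ne_ne_ne : ∀ i j k : Fin 4, ∃ x, i ≠ x ∧ j ≠ x ∧ k ≠ x := by
  decide

/-- No line of `ℙ(E)` meets all four sets `Z x`; lines are given by their 2-dimensional
subspaces of `E`. -/
def NoCommonTransversal (Z : Fin 4 → Set (ℙ K E)) : Prop :=
  ∀ L : Submodule K E, finrank K L = 2 → ∃ x, ∀ p ∈ coneOver (Z x), p ∉ L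

namespace IsHalfGrid

variable {R : Fin 4 → Submodule K E} {Z : Fin 4 → Set (ℙ K E)} {i j k : Fin 4} {p q : E}

lemma eq_zero_of_mem_of_mem (h : IsHalfGrid R Z) (hij : i ≠ j) (hi : p ∈ R i) (hj : p ∈ R j) :
    p = 0 :=
  Submodule.disjoint_def.1 (h.disjoint i j hij) p hi hj

/-- The line through `p` and `q` is the only transversal through `p` of the lines `R j` and `R k`,
so it is a grid line. -/
lemma mem_coneOver_of_sub_mem (h : IsHalfGrid R Z) (hij : i ≠ j) (hik : i ≠ k) (hjk : j ≠ k)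
    (hp : p ∈ coneOver (Z i)) (hq : q ∈ R j) (hpq : p - q ∈ R k) : q ∈ coneOver (Z j) := by
  obtain ⟨x, hix, hjx, hkx⟩ : ∃ x, i ≠ x ∧ j ≠ x ∧ k ≠ x :=
    exists_ne_ne_ne i j k
  obtain ⟨L, hL, hpL, hmeet⟩ := h.exists_transversal x i hix p hp
  obtain ⟨q', hq', hq'L⟩ := hmeet j hjx
  obtain ⟨r, hr, hrL⟩ := hmeet k hkx
  have hpi := h.mem_of_mem_coneOver i p hp
  have hqj := h.mem_of_mem_coneOver j q' hq'
  have hrk := h.mem_of_mem_coneOver k r hr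
  have hind : LinearIndependent K ![p, q'] := by
    rw [LinearIndependent.pair_iff' (ne_zero_of_mem_coneOver hp)]
    rintro c rfl
    exact ne_zero_of_mem_coneOver hq'
      (h.eq_zero_of_mem_of_mem hij ((R i).smul_mem c hpi) hqj)
  obtain ⟨s, t, rfl⟩ := exists_smul_add_smul_eq_of_finrank_eq_two hL hpL hq'L hrL hind
  have hsq : s • q = -t • q' := by
    have hdiff : s • q + t • q' = s • p + t • q' - s • (p - q) := by module
    rw [neg_smul]
    refine eq_neg_of_add_eq_zero_left (h.eq_zero_of_mem_of_mem hjk ?_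
      (hdiff ▸ (R k).sub_mem hrk ((R k).smul_mem s hpq)))
    exact (R j).add_mem ((R j).smul_mem s hq) ((R j).smul_mem t hqj)
  have hs : s ≠ 0 := by
    rintro rfl
    rw [zero_smul, zero_add] at hr hrk
    exact ne_zero_of_mem_coneOver hr
      (h.eq_zero_of_mem_of_mem hjk ((R j).smul_mem t hqj) hrk)
  have ht : t ≠ 0 := by
    rintro rfl
    rw [zero_smul, add_zero] at hr hrk
    exact ne_zero_of_mem_coneOver hr
      (h.eq_zero_of_mem_of_mem hik ((R i).smul_mem s hpi) hrk)
  rwa [← smul_mem_coneOver_iff hs, hsq, smul_mem_coneOver_iff (neg_ne_zero.2 ht)]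

lemma mem_coneOver_iff_of_sub_mem (h : IsHalfGrid R Z) (hij : i ≠ j) (hik : i ≠ k) (hjk : j ≠ k)
    (hp : p ∈ R i) (hq : q ∈ R j) (hpq : p - q ∈ R k) :
    p ∈ coneOver (Z i) ↔ q ∈ coneOver (Z j) :=
  ⟨fun hp' => h.mem_coneOver_of_sub_mem hij hik hjk hp' hq hpq, fun hq' =>
    h.mem_coneOver_of_sub_mem hij.symm hjk hik hq' hp (sub_mem_comm_iff.1 hpq)⟩

section Normalization

variable {a b : V →ₗ[K] E} {M : End K V}

lemma gridMap_mem_iff (h : IsHalfGrid R Z) (hR : ∀ x v, gridMap a b M x v ∈ R x) (x : Fin 4)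
    (v : V) : gridMap a b M x v ∈ coneOver (Z x) ↔ a v ∈ coneOver (Z 0) := by
  have h02 : a v ∈ coneOver (Z 0) ↔ a v + b v ∈ coneOver (Z 2) :=
    h.mem_coneOver_iff_of_sub_mem (k := 1) (by decide) (by decide) (by decide) (hR 0 v) (hR 2 v)
      (by simpa [gridMap] using hR 1 v)
  have h21 : a v + b v ∈ coneOver (Z 2) ↔ b v ∈ coneOver (Z 1) :=
    h.mem_coneOver_iff_of_sub_mem (k := 0) (by decide) (by decide) (by decide) (hR 2 v) (hR 1 v)
      (by simpa [gridMap] using hR 0 v)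
  have h03 : a v ∈ coneOver (Z 0) ↔ a v + b (M v) ∈ coneOver (Z 3) :=
    h.mem_coneOver_iff_of_sub_mem (k := 1) (by decide) (by decide) (by decide) (hR 0 v) (hR 3 v)
      (by simpa [gridMap] using hR 1 (M v))
  fin_cases x
  exacts [Iff.rfl, (h02.trans h21).symm, h02.symm, h03.symm]

lemma map_mem_coneOver_iff (h : IsHalfGrid R Z) (hR : ∀ x v, gridMap a b M x v ∈ R x) (v : V) :
    a (M v) ∈ coneOver (Z 0) ↔ a v ∈ coneOver (Z 0) := by
  rw [← h.gridMap_mem_iff hR 1 (M v), ← h.gridMap_mem_iff hR 3 v]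
  exact h.mem_coneOver_iff_of_sub_mem (k := 0) (by decide) (by decide) (by decide) (hR 1 (M v))
    (hR 3 v) (by simpa [gridMap] using hR 0 v)

lemma map_sub_mem_coneOver_iff (h : IsHalfGrid R Z) (hR : ∀ x v, gridMap a b M x v ∈ R x)
    (v : V) : a (v - M v) ∈ coneOver (Z 0) ↔ a v ∈ coneOver (Z 0) := by
  rw [← h.gridMap_mem_iff hR 3 v]
  refine h.mem_coneOver_iff_of_sub_mem (k := 2) (by decide) (by decide) (by decide)
    (hR 0 (v - M v)) (hR 3 v) ?_
  have hdiff : a (v - M v) - (a v + b (M v)) = -(a (M v) + b (M v)) := by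
    rw [map_sub]; abel
  exact hdiff ▸ (R 2).neg_mem (hR 2 (M v))

lemma linearIndependent_of_mem_coneOver (h : IsHalfGrid R Z)
    (hZ : NoCommonTransversal Z)
    (hR : ∀ x v, gridMap a b M x v ∈ R x) {v : V} (hv : a v ∈ coneOver (Z 0)) :
    LinearIndependent K ![v, M v] := by
  have hgrid (x : Fin 4) : gridMap a b M x v ∈ coneOver (Z x) := (h.gridMap_mem_iff hR x v).2 hv
  have hind : LinearIndependent K ![a v, b v] := by
    refine (LinearIndependent.pair_iff' (ne_zero_of_mem_coneOver hv)).2 fun c hc => ?_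
    exact ne_zero_of_mem_coneOver (hgrid 1) (h.eq_zero_of_mem_of_mem (i := 0) (j := 1) (by decide)
      (hc ▸ (R 0).smul_mem c (hR 0 v)) (hR 1 v))
  rw [LinearIndependent.pair_iff' (by rintro rfl; exact ne_zero_of_mem_coneOver hv (map_zero a))]
  intro c hc
  obtain ⟨x, hx⟩ := hZ (Submodule.span K {a v, b v}) (by
    rw [← Matrix.range_cons_cons_empty _ _ ![], finrank_span_eq_card hind, Fintype.card_fin])
  refine hx _ (hgrid x) ?_
  have hav : a v ∈ Submodule.span K {a v, b v} := Submodule.mem_span_of_mem (by simp)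
  have hbv : b v ∈ Submodule.span K {a v, b v} := Submodule.mem_span_of_mem (by simp)
  have hcv : b (M v) ∈ Submodule.span K {a v, b v} := by
    rw [← hc, map_smul]; exact Submodule.smul_mem _ c hbv
  fin_cases x
  exacts [hav, hbv, add_mem hav hbv, add_mem hav hcv]

lemma isGridFrame (h : IsHalfGrid R Z)
    (hZ : NoCommonTransversal Z)
    (ha : Function.Injective a) (haR : a.range = R 0) (hR : ∀ x v, gridMap a b M x v ∈ R x) :
    IsGridFrame Z a b M (map a ha ⁻¹' Z 0) := by
  refine ⟨?_, h.ncard_eq, fun v w hvw => ?_, fun x v hv => ?_, fun v => ?_, fun v => ?_,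
    fun v hv => ?_⟩
  · refine (Set.ncard_preimage_of_injective_subset_range (map_injective a ha) fun p hp => ?_).trans
      (h.ncard_eq 0)
    induction p using ind with
    | h p hp0 =>
      obtain ⟨v, rfl⟩ := haR ▸ h.mem_of_mem_coneOver 0 p ⟨hp0, hp⟩
      exact ⟨Projectivization.mk K v ((map_ne_zero_iff a ha).1 hp0), rfl⟩
  · have hv : a v = 0 := h.eq_zero_of_mem_of_mem (i := 0) (j := 1) (by decide) (hR 0 v)
      (eq_neg_of_add_eq_zero_left hvw ▸ (R 1).neg_mem (hR 1 w))
    have hw : b w = 0 := by simpa [hv] using hvw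
    refine ⟨(map_eq_zero_iff a ha).1 hv, (map_eq_zero_iff a ha).1 ?_⟩
    exact h.eq_zero_of_mem_of_mem (i := 0) (j := 2) (by decide) (hR 0 w)
      (by simpa [gridMap, hw] using hR 2 w)
  · exact (h.gridMap_mem_iff hR x v).2 ((mem_coneOver_preimage_map_iff ha).1 hv)
  · simpa only [mem_coneOver_preimage_map_iff] using h.map_mem_coneOver_iff hR v
  · simpa only [mem_coneOver_preimage_map_iff] using h.map_sub_mem_coneOver_iff hR v
  · exact h.linearIndependent_of_mem_coneOver hZ hR ((mem_coneOver_preimage_map_iff ha).1 hv)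

end Normalization

lemma exists_gridMap_mem (h : IsHalfGrid R Z) (hE : finrank K E = 4) :
    ∃ (b : R 0 →ₗ[K] E) (M : End K (R 0)), ∀ x v, gridMap (R 0).subtype b M x v ∈ R x := by
  have : FiniteDimensional K E := Module.finite_of_finrank_eq_succ hE
  have hcompl {x y : Fin 4} (hxy : x ≠ y) : IsCompl (R x) (R y) :=
    (Submodule.isCompl_iff_disjoint _ _ (by rw [h.finrank_eq, h.finrank_eq, hE])).2
      (h.disjoint x y hxy)
  obtain ⟨b, hb, hab⟩ :=
    exists_linearMap_forall_add_mem (hcompl (x := 1) (y := 2) (by decide)) (R 0).subtype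
  obtain ⟨c, hc, hac⟩ :=
    exists_linearMap_forall_add_mem (hcompl (x := 1) (y := 3) (by decide)) (R 0).subtype
  have hbinj : Function.Injective b := (injective_iff_map_eq_zero b).2 fun v hv =>
    Subtype.ext (h.eq_zero_of_mem_of_mem (i := 0) (j := 2) (by decide) v.2
      (by simpa [hv] using hab v))
  have hbrange : b.range = R 1 := Submodule.eq_of_le_of_finrank_eq
    (LinearMap.range_le_iff_comap.2 (eq_top_iff.2 fun v _ => hb v))
    (by rw [LinearMap.finrank_range_of_inj hbinj, h.finrank_eq, h.finrank_eq])
  obtain ⟨M, rfl⟩ := exists_comp_eq_of_range_le hbinj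
    ((LinearMap.range_le_iff_comap.2 (eq_top_iff.2 fun v _ => hc v)).trans hbrange.ge)
  refine ⟨b, M, fun x v => ?_⟩
  fin_cases x
  exacts [v.2, hb v, hab v, hac v]

lemma exists_isGridFrame (h : IsHalfGrid R Z) (hE : finrank K E = 4)
    (hZ : NoCommonTransversal Z) :
    ∃ (b : R 0 →ₗ[K] E) (M : End K (R 0)) (Y : Set (ℙ K (R 0))),
      IsGridFrame Z (R 0).subtype b M Y := by
  obtain ⟨b, M, hR⟩ := h.exists_gridMap_mem hE
  exact ⟨b, M, _, h.isGridFrame hZ (R 0).subtype_injective (R 0).range_subtype hR⟩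

end IsHalfGrid

end HalfGrid

end HalfGridClassification

namespace HalfGridHyp

open HalfGridClassification

variable {R : Fin 4 → Submodule ℂ (Fin 4 → ℂ)} {Z : Fin 4 → Set (ℙ ℂ (Fin 4 → ℂ))}

lemma eq_of_mem_of_submodule_le (hyp : HalfGridHyp R Z) {p : ℙ ℂ (Fin 4 → ℂ)} {i j : Fin 4}
    (hp : p ∈ Z i) (hle : p.submodule ≤ R j) : i = j := by
  by_contra hij
  have hbot : p.submodule = ⊥ :=
    eq_bot_iff.2 ((le_inf (hyp.mem_line i p hp) hle).trans (hyp.skew i j hij).le)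
  have hrank := p.finrank_submodule
  rw [hbot, finrank_bot] at hrank
  exact zero_ne_one hrank

lemma isHalfGrid (hyp : HalfGridHyp R Z) : IsHalfGrid R Z where
  finrank_eq := hyp.finrank_eq
  disjoint x y hxy := disjoint_iff.2 (hyp.skew x y hxy)
  ncard_eq := hyp.ncard_eq
  mem_of_mem_coneOver x v hv := mk_submodule_le_iff.1 (hyp.mem_line x _ hv.2)
  exists_transversal x i hix p hp := by
    obtain ⟨ℓ, hℓ, -, hmeet, hgrid⟩ := hyp.grid x
    have hpx : Projectivization.mk ℂ p hp.1 ∉ Z x := fun hpx =>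
      hix (hyp.eq_of_mem_of_submodule_le hp.2 (hyp.mem_line x _ hpx))
    obtain ⟨m, -, -, hpm, -⟩ := hgrid.ge ⟨Set.mem_iUnion_of_mem i hp.2, hpx⟩
    refine ⟨ℓ m, hℓ m, mk_submodule_le_iff.1 hpm, fun y hyx => ?_⟩
    obtain ⟨q, ⟨hqm, hqy⟩, -⟩ := hmeet m y hyx
    obtain ⟨z, hqz⟩ := Set.mem_iUnion.1 (hgrid.le ⟨m, y, hyx, hqm, hqy⟩).1
    obtain rfl : z = y := hyp.eq_of_mem_of_submodule_le hqz hqy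
    induction q using ind with
    | h q hq => exact ⟨q, ⟨hq, hqz⟩, mk_submodule_le_iff.1 hqm⟩

lemma noCommonTransversal (hyp : HalfGridHyp R Z)
    (hcol : ∀ T : Set (ℙ ℂ (Fin 4 → ℂ)), T ⊆ (⋃ x, Z x) → T.ncard = 4 →
      (∃ U : Submodule ℂ (Fin 4 → ℂ), Module.finrank ℂ U = 2 ∧
        ∀ p ∈ T, Projectivization.submodule p ≤ U) →
      ∃ x, T = Z x) :
    NoCommonTransversal Z := by
  intro L hL
  by_contra! hmeet
  choose w hw hwL using hmeet
  let P (x : Fin 4) : ℙ ℂ (Fin 4 → ℂ) := Projectivization.mk ℂ (w x) (hw x).1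
  have hPZ (x : Fin 4) : P x ∈ Z x := (hw x).2
  have hP : Function.Injective P := fun i j hij =>
    hyp.eq_of_mem_of_submodule_le (hPZ i) (hij ▸ hyp.mem_line j (P j) (hPZ j))
  obtain ⟨x, hx⟩ := hcol (Set.range P)
    (Set.range_subset_iff.2 fun i => Set.mem_iUnion_of_mem i (hPZ i))
    (by rw [Set.ncard_range_of_injective hP, Nat.card_fin])
    ⟨L, hL, Set.forall_mem_range.2 fun i => mk_submodule_le_iff.2 (hwL i)⟩
  have heq (i : Fin 4) : i = x :=
    hyp.eq_of_mem_of_submodule_le (hPZ i) (hyp.mem_line x (P i) (hx ▸ Set.mem_range_self i))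
  exact zero_ne_one ((heq 0).trans (heq 1).symm)

end HalfGridHyp

open HalfGridClassification in
theorem harmonic_case_classification_general {K E : Type*} [Field K] [NeZero (2 : K)]
    [AddCommGroup E] [Module K E] (hE : Module.finrank K E = 4) {R : Fin 4 → Submodule K E}
    {Z : Fin 4 → Set (ℙ K E)} (h : IsHalfGrid R Z) (hZ : NoCommonTransversal Z) :
    IsHarmonic (⋃ x, Z x) := by
  obtain ⟨b, M, Y, F⟩ := h.exists_isGridFrame hE hZ
  exact F.isHarmonic (h.finrank_eq 0) hE

/-- Let `Z = Z 0 ∪ Z 1 ∪ Z 2 ∪ Z 3` satisfy the half-grid hypotheses and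
assume in addition that the only 4-element collinear subsets of `Z` are the quadruples
`Z 0, …, Z 3` (so exactly 4 lines contain 4 of the configuration points).  Then `Z` is
projectively equivalent to configuration B: some linear automorphism of `ℂ⁴` induces a
projective transformation of `ℙ³` mapping configuration B onto `Z`. -/
theorem harmonic_case_classification
    (R : Fin 4 → Submodule ℂ (Fin 4 → ℂ)) (Z : Fin 4 → Set (ℙ ℂ (Fin 4 → ℂ)))
    (hyp : HalfGridHyp R Z)
    (hcol : ∀ T : Set (ℙ ℂ (Fin 4 → ℂ)), T ⊆ (⋃ x, Z x) → T.ncard = 4 →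
      (∃ U : Submodule ℂ (Fin 4 → ℂ), Module.finrank ℂ U = 2 ∧
        ∀ p ∈ T, Projectivization.submodule p ≤ U) →
      ∃ x, T = Z x) :
    ∃ F : (Fin 4 → ℂ) ≃ₗ[ℂ] (Fin 4 → ℂ),
      Projectivization.map F.toLinearMap F.injective '' configB = ⋃ x, Z x :=
  harmonic_case_classification_general (by simp) hyp.isHalfGrid (hyp.noCommonTransversal hcol)
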